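/- arXiv:math/0209242 — 3 statements merged into one kernel-verified Lean document; each statement's English description precedes it below -/
import Mathlib

section
/- Let K be a field of characteristic p > 2 with p and m coprime, and let m, n be positive integers with m - m/n > 2. Let R = K[A,B,C,D,T]/I as above. Then there exists a power q = p^e such that (b^n t^{m-1})^q ∈ (a^q, d^q), i.e., b^n t^{m-1} lies in the Frobenius closure of (a, d). In particular, R is not F-pure. -/
open MvPolynomial

/-!
Put `w = bⁿ - d` and `s = a² + tᵐ`. The minors give `b w = a² d` and `s w = c d`, so products of
`w` with `b` produce powers of `a²`, while products of `w` with `s` produce powers of `d`.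
With `ρ = ⌊(m - 1) q / m⌋`, the power `(bⁿ tᵐ⁻¹) ^ q` is a multiple of
`b ^ (n g) * (w + d) ^ (q - g) * (s - a²) ^ ρ`. In the expansion of the last two factors, a monomial
whose total degree in `a²` and `w` is at least `r = ⌈q / 2⌉` becomes, with the help of `b ^ (n g)`,
a multiple of `a ^ (2 r)`; any other monomial has so many factors `s` that `s w = c d` and
`s bⁿ = (c + s) d` make it a multiple of `d ^ q`. Both steps are possible with `g = ρ + 1 - r`,
since `m + 2 n < m n` gives `r ≤ n g` as soon as `q ≥ 2`.
-/

section Monomials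

variable {S : Type*} [CommSemiring S] {α b d s w : S}

lemma pow_dvd_pow_mul_pow_mul_pow (hα : α ∣ b * w) {r i u : ℕ} (hr : r ≤ i + u) :
    α ^ r ∣ α ^ i * w ^ u * b ^ r := by
  have h_pow : α ^ (r - i) ∣ w ^ u * b ^ r :=
    calc α ^ (r - i) ∣ (b * w) ^ (r - i) := pow_dvd_pow_of_dvd hα _
      _ = w ^ (r - i) * b ^ (r - i) := by rw [mul_comm, mul_pow]
      _ ∣ w ^ u * b ^ r := mul_dvd_mul (pow_dvd_pow _ (by omega)) (pow_dvd_pow _ (by omega))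
  calc α ^ r ∣ α ^ i * α ^ (r - i) := by rw [← pow_add]; exact pow_dvd_pow _ (by omega)
    _ ∣ α ^ i * (w ^ u * b ^ r) := mul_dvd_mul_left _ h_pow
    _ = α ^ i * w ^ u * b ^ r := (mul_assoc _ _ _).symm

lemma pow_dvd_pow_mul_pow_mul_pow_mul_add_pow (hs : d ∣ s * w) {g j u v : ℕ} (hj : u + g ≤ j) :
    d ^ (u + v + g) ∣ s ^ j * (w ^ u * d ^ v) * (w + d) ^ g := by
  have hs_add : d ∣ s * (w + d) := by
    rw [mul_add]
    exact dvd_add hs (dvd_mul_left d s)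
  calc d ^ (u + v + g) = d ^ u * d ^ g * d ^ v := by ring
    _ ∣ (s * w) ^ u * (s * (w + d)) ^ g * d ^ v :=
      mul_dvd_mul_right (mul_dvd_mul (pow_dvd_pow_of_dvd hs u) (pow_dvd_pow_of_dvd hs_add g)) _
    _ = s ^ (u + g) * (w ^ u * d ^ v) * (w + d) ^ g := by rw [mul_pow, mul_pow]; ring
    _ ∣ s ^ j * (w ^ u * d ^ v) * (w + d) ^ g :=
      mul_dvd_mul_right (mul_dvd_mul_right (pow_dvd_pow s hj) _) _

variable {J : Ideal S} {n r g : ℕ}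

lemma pow_mul_monomial_mem (hα : α ∣ b * w) (hs : d ∣ s * w) (hb : b ^ n = w + d)
    (hrg : r ≤ n * g) {i j u v : ℕ} (hij : r + g ≤ i + j + 1)
    (hαJ : α ^ r ∈ J) (hdJ : d ^ (u + v + g) ∈ J) :
    b ^ (n * g) * (w ^ u * d ^ v) * (s ^ j * α ^ i) ∈ J := by
  by_cases hr : r ≤ i + u
  · refine J.mem_of_dvd ?_ hαJ
    calc α ^ r ∣ α ^ i * w ^ u * b ^ r := pow_dvd_pow_mul_pow_mul_pow hα hr
      _ ∣ α ^ i * w ^ u * b ^ (n * g) := mul_dvd_mul_left _ (pow_dvd_pow b hrg)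
      _ ∣ α ^ i * w ^ u * b ^ (n * g) * (d ^ v * s ^ j) := dvd_mul_right _ _
      _ = b ^ (n * g) * (w ^ u * d ^ v) * (s ^ j * α ^ i) := by ring
  · refine J.mem_of_dvd ?_ hdJ
    calc d ^ (u + v + g) ∣ s ^ j * (w ^ u * d ^ v) * (w + d) ^ g :=
          pow_dvd_pow_mul_pow_mul_pow_mul_add_pow hs (by omega)
      _ ∣ s ^ j * (w ^ u * d ^ v) * (w + d) ^ g * α ^ i := dvd_mul_right _ _
      _ = b ^ (n * g) * (w ^ u * d ^ v) * (s ^ j * α ^ i) := by rw [pow_mul, hb]; ring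

lemma pow_mul_mul_add_pow_mem (hα : α ∣ b * w) (hs : d ∣ s * w) (hb : b ^ n = w + d)
    (hrg : r ≤ n * g) {q ρ : ℕ} (hgq : g ≤ q) (hρ : r + g ≤ ρ + 1)
    (hαJ : α ^ r ∈ J) (hdJ : d ^ q ∈ J) :
    b ^ (n * q) * (s + α) ^ ρ ∈ J := by
  obtain ⟨N, rfl⟩ := Nat.exists_eq_add_of_le' hgq
  have h_split : b ^ (n * (N + g)) = b ^ (n * g) * (w + d) ^ N := by
    rw [← hb, ← pow_mul, ← pow_add, mul_add, add_comm]
  rw [h_split, (Commute.all w d).add_pow', (Commute.all s α).add_pow', mul_assoc,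
    Finset.sum_mul_sum, Finset.mul_sum]
  simp only [Finset.mul_sum]
  refine J.sum_mem fun x hx => J.sum_mem fun y hy => ?_
  rw [Finset.HasAntidiagonal.mem_antidiagonal] at hx hy
  rw [smul_mul_smul_comm, mul_smul_comm, ← mul_assoc]
  refine nsmul_mem (pow_mul_monomial_mem hα hs hb hrg (by omega) hαJ ?_) _
  rwa [hx]

end Monomials

lemma exists_exponents {m n q : ℕ} (hmn : m + 2 * n < m * n) (hq : 1 < q) :
    ∃ r g ρ : ℕ, q ≤ 2 * r ∧ r ≤ n * g ∧ g ≤ q ∧ r + g ≤ ρ + 1 ∧ m * ρ ≤ (m - 1) * q := by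
  obtain ⟨l, rfl⟩ : ∃ l, m = l + 2 := Nat.exists_eq_add_of_le' (by by_contra! h; nlinarith)
  have hln : l + 2 < l * n := by linarith
  obtain ⟨k, hk, hkq, hqk⟩ : ∃ k, 0 < k ∧ 2 * k ≤ q ∧ q ≤ 2 * k + 1 :=
    ⟨q / 2, by omega, by omega, by omega⟩
  set ρ := (l + 1) * q / (l + 2)
  have hρ_le : (l + 2) * ρ ≤ (l + 1) * q := Nat.mul_div_le _ _
  have hρ_lt : (l + 1) * q < (l + 2) * (ρ + 1) := Nat.lt_mul_div_succ _ (by omega)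
  have hρq : ρ ≤ q := by nlinarith
  have hkρ : q ≤ k + (ρ + 1) := by nlinarith
  obtain ⟨g, hg⟩ : ∃ g, k + (ρ + 1) = q + g := Nat.exists_eq_add_of_le hkρ
  have hkg : l * k ≤ (l + 2) * g := by
    have : (l + 2) * k + (l + 2) * (ρ + 1) = (l + 2) * q + (l + 2) * g := by
      rw [← mul_add, hg, mul_add]
    linarith
  have hkng : k < n * g := by
    refine lt_of_mul_lt_mul_left (a := l + 2) ?_ (Nat.zero_le _)
    calc (l + 2) * k < l * n * k := Nat.mul_lt_mul_of_pos_right hln hk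
      _ = n * (l * k) := by ring
      _ ≤ n * ((l + 2) * g) := Nat.mul_le_mul_left n hkg
      _ = (l + 2) * (n * g) := by ring
  exact ⟨q - k, g, ρ, by omega, by omega, by omega, by omega, hρ_le⟩

theorem stmt4_general {S : Type*} [CommRing S] {a b d t : S} {m n q : ℕ}
    (hmn : m + 2 * n < m * n) (hq : 1 < q) (ha : a ^ 2 ∣ b * (b ^ n - d))
    (hd : d ∣ (a ^ 2 + t ^ m) * (b ^ n - d)) :
    (b ^ n * t ^ (m - 1)) ^ q ∈ Ideal.span {a ^ q, d ^ q} := by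
  obtain ⟨r, g, ρ, hqr, hrg, hgq, hρ, hmρ⟩ := exists_exponents hmn hq
  have haJ : (-a ^ 2) ^ r ∈ Ideal.span {a ^ q, d ^ q} := by
    refine Ideal.mem_of_dvd _ ?_ (Ideal.subset_span (Set.mem_insert _ _))
    rw [neg_pow, ← pow_mul]
    exact (pow_dvd_pow a hqr).mul_left _
  have hdJ : d ^ q ∈ Ideal.span {a ^ q, d ^ q} := Ideal.subset_span (Set.mem_insert_of_mem _ rfl)
  refine Ideal.mem_of_dvd _ ?_ (pow_mul_mul_add_pow_mem (neg_dvd.2 ha) hd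
    (sub_add_cancel _ _).symm hrg hgq hρ haJ hdJ)
  rw [mul_pow, ← pow_mul, ← pow_mul, add_neg_cancel_comm, ← pow_mul]
  exact mul_dvd_mul_left _ (pow_dvd_pow t hmρ)

/-- with char K = p > 2, gcd(p,m) = 1 and mn - m - 2n > 0, the element
bⁿt^{m-1} lies in the Frobenius closure of (a, d): there is q = p^e with
(bⁿt^{m-1})^q ∈ (a^q, d^q).  (Hence R is not F-pure.) -/
theorem stmt4 (K : Type) [Field K] (p : ℕ) [Fact p.Prime] [CharP K p] (hp : 2 < p)
    (m n : ℕ) (hm : 0 < m) (hn : 0 < n) (hmn : m + 2 * n < m * n) (hpm : Nat.Coprime p m)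
    (I : Ideal (MvPolynomial (Fin 5) K))
    (hI : I = Ideal.span
      { (X 0 ^ 2) * (X 0 ^ 2 + X 4 ^ m) - X 1 * X 2,
        (X 0 ^ 2 + X 4 ^ m) * (X 1 ^ n - X 3) - X 2 * X 3,
        X 1 * (X 1 ^ n - X 3) - (X 0 ^ 2) * X 3 })
    (a b d t : MvPolynomial (Fin 5) K ⧸ I)
    (ha : a = Ideal.Quotient.mk I (X 0)) (hb : b = Ideal.Quotient.mk I (X 1))
    (hd : d = Ideal.Quotient.mk I (X 3)) (ht : t = Ideal.Quotient.mk I (X 4)) :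
    ∃ e : ℕ, (b ^ n * t ^ (m - 1)) ^ (p ^ e) ∈
      Ideal.span {a ^ (p ^ e), d ^ (p ^ e)} := by
  subst ha hb hd ht
  have h_left : (X 0 ^ 2 + X 4 ^ m) * (X 1 ^ n - X 3) - X 2 * X 3 ∈ I :=
    hI ▸ Ideal.subset_span (by simp)
  have h_right : X 1 * (X 1 ^ n - X 3) - X 0 ^ 2 * X 3 ∈ I := hI ▸ Ideal.subset_span (by simp)
  exact ⟨1, stmt4_general hmn (by rw [pow_one]; omega)
    (Dvd.intro (Ideal.Quotient.mk I (X 3)) (Ideal.Quotient.eq.2 h_right).symm)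
    (Dvd.intro_left (Ideal.Quotient.mk I (X 2)) (Ideal.Quotient.eq.2 h_left).symm)⟩
end

section
/- Let K be a field and m, n positive integers. Let R = K[A,B,C,D,T]/I where I is generated by the 2×2 minors of the matrix with rows (A²+T^m, B, D) and (C, A², B^n - D). Then the images t, c, d form a system of parameters: R/(t, c, d) has Krull dimension 0, and R has Krull dimension 3. -/
open MvPolynomial

/-!
Let `P = K[c, d, t]`. Multiplying the minor `(a² + t^m)(b^n - d) - cd` by `d` and substituting
`a²d = b(b^n - d)` eliminates `a` and leaves a monic equation for `b` over `P`; then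
`a²(a² + t^m) = bc` is a monic equation for `a` over `P[b]`. So `R` is integral over `P`, and
modulo `(t, c, d)` it is integral over `K`.

Conversely, once `d` is inverted, a root `b` of the eliminant together with a square root `a` of
`b(b^n - d)/d` solves all three equations. Such roots exist in an extension of `Frac P`, so `P → R`
is injective and `dim R = dim P`. The origin solves the equations as well, so `K → R/(t, c, d)` is
injective.
-/

open scoped Polynomial

universe u

section Extensions

theorem ringKrullDim_eq_of_isIntegral (R S : Type*) [CommRing R] [CommRing S] [Algebra R S]
    [Algebra.IsIntegral R S] [FaithfulSMul R S] : ringKrullDim S = ringKrullDim R := by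
  apply le_antisymm
  · refine Order.krullDim_le_of_strictMono (PrimeSpectrum.comap (algebraMap R S)) fun p q hpq ↦ ?_
    exact Ideal.IsIntegral.comap_lt_comap (R := R) (I := p.asIdeal) (J := q.asIdeal) hpq
  · refine iSup_le fun l ↦ ?_
    obtain ⟨Q, hQ, hQl⟩ := Ideal.nonempty_primesOver (S := S) l.head.asIdeal
    obtain ⟨L, hL, -⟩ := Ideal.exists_ltSeries_of_hasGoingUp l Q
    rw [← hL]
    exact Order.LTSeries.length_le_krullDim L

theorem isIntegral_of_surjective {σ K S A : Type*} [CommRing K] [CommRing S] [CommRing A]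
    [Algebra K S] [Algebra S A] [Algebra K A] [IsScalarTower K S A]
    {φ : MvPolynomial σ K →ₐ[K] A} (hφ : Function.Surjective φ)
    (hX : ∀ i, IsIntegral S (φ (X i))) : Algebra.IsIntegral S A := by
  have hle : φ.range ≤ (integralClosure S A).restrictScalars K := by
    rw [← Algebra.map_top, ← adjoin_range_X, AlgHom.map_adjoin, Algebra.adjoin_le_iff]
    rintro _ ⟨_, ⟨i, rfl⟩, rfl⟩
    exact hX i
  exact ⟨fun x ↦ hle (hφ x)⟩

theorem faithfulSMul_of_algHom {R A B : Type*} [CommRing R] [CommRing A] [CommRing B] [Algebra R A]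
    [Algebra R B] [FaithfulSMul R B] (f : A →ₐ[R] B) : FaithfulSMul R A := by
  rw [faithfulSMul_iff_algebraMap_injective]
  refine .of_comp (f := f) ?_
  rw [← AlgHom.coe_toRingHom, ← RingHom.coe_comp, f.comp_algebraMap]
  exact FaithfulSMul.algebraMap_injective R B

theorem exists_faithfulSMul_aeval_eq_zero {R : Type u} [CommRing R] {p : R[X]} (hp : p.Monic)
    (hdeg : p.natDegree ≠ 0) :
    ∃ (S : Type u) (_ : CommRing S) (_ : Algebra R S) (_ : FaithfulSMul R S) (x : S),
      Polynomial.aeval x p = 0 := by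
  refine ⟨AdjoinRoot p, inferInstance, inferInstance, ?_, AdjoinRoot.root p, by simp⟩
  rw [faithfulSMul_iff_algebraMap_injective, injective_iff_map_eq_zero]
  intro r hr
  by_contra hr0
  exact AdjoinRoot.mk_ne_zero_of_natDegree_lt hp (Polynomial.C_ne_zero.2 hr0)
    (by simpa [Nat.pos_iff_ne_zero] using hdeg) hr

end Extensions

/-- The point `(a, b, c, d, t)` is a common zero of the 2×2 minors of the matrix with rows
`(a² + t^m, b, d)` and `(c, a², b^n - d)`; `minorᵢⱼ` is the minor on columns `i` and `j`. -/
structure MinorsVanish {A : Type*} [CommRing A] (m n : ℕ) (a b c d t : A) : Prop where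
  minor₁₂ : a ^ 2 * (a ^ 2 + t ^ m) = b * c
  minor₁₃ : (a ^ 2 + t ^ m) * (b ^ n - d) = c * d
  minor₂₃ : b * (b ^ n - d) = a ^ 2 * d

section Eliminant

variable {P A : Type*} [CommRing P] [CommRing A] [Algebra P A] {m n : ℕ}

/-- The polynomial satisfied by `b` after eliminating `a` from the 2×2 minors. -/
noncomputable def eliminant (m n : ℕ) (c d t : P) : P[X] :=
  (Polynomial.X ^ n - Polynomial.C d) *
    (Polynomial.X * (Polynomial.X ^ n - Polynomial.C d) + Polynomial.C (t ^ m * d)) -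
      Polynomial.C (c * d ^ 2)

theorem exists_eliminant_eq_X_pow_add (hn : 0 < n) (c d t : P) :
    ∃ q : P[X], q.natDegree < 2 * n + 1 ∧ eliminant m n c d t = Polynomial.X ^ (2 * n + 1) + q := by
  refine ⟨Polynomial.C (-2 * d) * Polynomial.X ^ (n + 1) +
    Polynomial.C (t ^ m * d) * Polynomial.X ^ n + Polynomial.C (d ^ 2) * Polynomial.X -
    Polynomial.C (t ^ m * d ^ 2 + c * d ^ 2), ?_, ?_⟩
  · refine lt_of_le_of_lt (b := n + 1) ?_ (by lia)
    compute_degree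
  · simp only [eliminant, map_mul, map_add, map_pow, map_neg, map_ofNat]
    ring

theorem eliminant_monic (hn : 0 < n) (c d t : P) : (eliminant m n c d t).Monic := by
  obtain ⟨q, hq, h⟩ := exists_eliminant_eq_X_pow_add (m := m) hn c d t
  rw [h]
  exact Polynomial.monic_X_pow_add (Polynomial.degree_le_natDegree.trans_lt (mod_cast hq))

theorem natDegree_eliminant [Nontrivial P] (hn : 0 < n) (c d t : P) :
    (eliminant m n c d t).natDegree = 2 * n + 1 := by
  obtain ⟨q, hq, h⟩ := exists_eliminant_eq_X_pow_add (m := m) hn c d t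
  rw [h, Polynomial.natDegree_add_eq_left_of_natDegree_lt (by simpa using hq),
    Polynomial.natDegree_X_pow]

theorem aeval_eliminant {a b : A} {d : P}
    (h : b * (b ^ n - algebraMap P A d) = a ^ 2 * algebraMap P A d) (c t : P) :
    Polynomial.aeval b (eliminant m n c d t) = algebraMap P A d *
      ((a ^ 2 + algebraMap P A t ^ m) * (b ^ n - algebraMap P A d) -
        algebraMap P A c * algebraMap P A d) := by
  simp only [eliminant, map_sub, map_mul, map_add, map_pow, Polynomial.aeval_X, Polynomial.aeval_C]
  linear_combination (b ^ n - algebraMap P A d) * h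

end Eliminant

namespace MinorsVanish

theorem map {A B F : Type*} [CommRing A] [CommRing B] [FunLike F A B] [RingHomClass F A B]
    {m n : ℕ} {a b c d t : A} (h : MinorsVanish m n a b c d t) (f : F) :
    MinorsVanish m n (f a) (f b) (f c) (f d) (f t) where
  minor₁₂ := by simpa using congrArg f h.minor₁₂
  minor₁₃ := by simpa using congrArg f h.minor₁₃
  minor₂₃ := by simpa using congrArg f h.minor₂₃

section Integral

variable {S A : Type*} [CommRing S] [CommRing A] [Algebra S A] {m n : ℕ} {a b : A} {c d t : S}

theorem isIntegral_b (hn : 0 < n)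
    (h : MinorsVanish m n a b (algebraMap S A c) (algebraMap S A d) (algebraMap S A t)) :
    IsIntegral S b := by
  refine ⟨eliminant m n c d t, eliminant_monic hn c d t, ?_⟩
  rw [← Polynomial.aeval_def, aeval_eliminant h.minor₂₃, h.minor₁₃, sub_self, mul_zero]

theorem isIntegral_a (hn : 0 < n)
    (h : MinorsVanish m n a b (algebraMap S A c) (algebraMap S A d) (algebraMap S A t)) :
    IsIntegral S a := by
  nontriviality S
  have hmonic : (Polynomial.X * (Polynomial.X + Polynomial.C (t ^ m))).Monic :=
    Polynomial.monic_X.mul (Polynomial.monic_X_add_C _)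
  refine .of_pow two_pos (.of_aeval_monic hmonic ?_ ?_)
  · rw [Polynomial.monic_X.natDegree_mul (Polynomial.monic_X_add_C _)]
    simp
  · simpa [h.minor₁₂] using (h.isIntegral_b hn).mul isIntegral_algebraMap

end Integral

section Extension

variable {P A : Type*} [CommRing P] [CommRing A] [Algebra P A] {m n : ℕ}

theorem of_aeval_eliminant_eq_zero {a b : A} {c d t : P} (hd : IsRegular (algebraMap P A d))
    (hb : Polynomial.aeval b (eliminant m n c d t) = 0)
    (ha : b * (b ^ n - algebraMap P A d) = a ^ 2 * algebraMap P A d) :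
    MinorsVanish m n a b (algebraMap P A c) (algebraMap P A d) (algebraMap P A t) := by
  have h₁₃ : (a ^ 2 + algebraMap P A t ^ m) * (b ^ n - algebraMap P A d) =
      algebraMap P A c * algebraMap P A d := by
    rw [aeval_eliminant ha] at hb
    exact sub_eq_zero.1 (hd.left.mul_left_eq_zero_iff.1 hb)
  refine ⟨hd.left ?_, h₁₃, ha⟩
  linear_combination b * h₁₃ - (a ^ 2 + algebraMap P A t ^ m) * ha

end Extension

theorem exists_faithfulSMul_of_isUnit {P : Type u} [CommRing P] [Nontrivial P] {m n : ℕ}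
    (hn : 0 < n) (c t : P) {d : P} (hd : IsUnit d) :
    ∃ (L : Type u) (_ : CommRing L) (_ : Algebra P L) (_ : FaithfulSMul P L) (a b : L),
      MinorsVanish m n a b (algebraMap P L c) (algebraMap P L d) (algebraMap P L t) := by
  obtain ⟨B, _, _, _, b, hb⟩ := exists_faithfulSMul_aeval_eq_zero
    (eliminant_monic (m := m) hn c d t) (by rw [natDegree_eliminant hn]; lia)
  have : Nontrivial B := (FaithfulSMul.algebraMap_injective P B).nontrivial
  let s : B := algebraMap P B ↑hd.unit⁻¹ * (b * (b ^ n - algebraMap P B d))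
  have hs : s * algebraMap P B d = b * (b ^ n - algebraMap P B d) := by
    rw [mul_right_comm, ← map_mul, hd.val_inv_mul, map_one, one_mul]
  obtain ⟨L, _, _, _, a, ha⟩ := exists_faithfulSMul_aeval_eq_zero
    (Polynomial.monic_X_pow_sub_C s two_ne_zero) (by simp)
  replace ha : a ^ 2 = algebraMap B L s := by simpa [sub_eq_zero] using ha
  let _ : Algebra P L := Algebra.compHom L (algebraMap P B)
  have : IsScalarTower P B L := .of_algebraMap_eq fun _ ↦ rfl
  refine ⟨L, inferInstance, inferInstance, .trans P B L, a, algebraMap B L b,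
    of_aeval_eliminant_eq_zero (hd.map _).isRegular ?_ ?_⟩
  · rw [Polynomial.aeval_algebraMap_apply, hb, map_zero]
  · rw [ha, IsScalarTower.algebraMap_apply P B L, ← map_mul, hs, map_mul, map_sub, map_pow]

theorem exists_faithfulSMul {P : Type u} [CommRing P] [Nontrivial P] {m n : ℕ}
    (hn : 0 < n) (c t : P) {d : P} (hd : IsRegular d) :
    ∃ (L : Type u) (_ : CommRing L) (_ : Algebra P L) (_ : FaithfulSMul P L) (a b : L),
      MinorsVanish m n a b (algebraMap P L c) (algebraMap P L d) (algebraMap P L t) := by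
  let Q := FractionRing P
  obtain ⟨L, _, _, _, a, b, h⟩ := exists_faithfulSMul_of_isUnit (m := m) hn (algebraMap P Q c)
    (algebraMap P Q t) (IsLocalization.map_units Q ⟨d, hd.mem_nonZeroDivisors⟩)
  let _ : Algebra P L := Algebra.compHom L (algebraMap P Q)
  have : IsScalarTower P Q L := .of_algebraMap_eq fun _ ↦ rfl
  exact ⟨L, inferInstance, inferInstance, .trans P Q L, a, b, h⟩

end MinorsVanish

/-- The ideal of `K[a, b, c, d, t]` (variables numbered from `0` in this order) generated by the
2×2 minors of the matrix with rows `(a² + t^m, b, d)` and `(c, a², b^n - d)`. -/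
noncomputable def minorsIdeal (K : Type*) [CommRing K] (m n : ℕ) : Ideal (MvPolynomial (Fin 5) K) :=
  Ideal.span
    { (X 0 ^ 2) * (X 0 ^ 2 + X 4 ^ m) - X 1 * X 2,
      (X 0 ^ 2 + X 4 ^ m) * (X 1 ^ n - X 3) - X 2 * X 3,
      X 1 * (X 1 ^ n - X 3) - (X 0 ^ 2) * X 3 }

/-- The ring `R = K[a, b, c, d, t] / I`, where `I` is the ideal of 2×2 minors. -/
abbrev DeterminantalRing (K : Type*) [CommRing K] (m n : ℕ) : Type _ :=
  MvPolynomial (Fin 5) K ⧸ minorsIdeal K m n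

namespace DeterminantalRing

variable {K : Type u} [CommRing K] {m n : ℕ}

/-- The image in `R` of the `i`-th variable. -/
noncomputable abbrev coord (i : Fin 5) : DeterminantalRing K m n := Ideal.Quotient.mk _ (X i)

theorem minorsVanish_coord :
    MinorsVanish m n (coord 0 : DeterminantalRing K m n) (coord 1) (coord 2) (coord 3)
      (coord 4) where
  minor₁₂ := Ideal.Quotient.eq.2 <| Ideal.subset_span <| .inl rfl
  minor₁₃ := Ideal.Quotient.eq.2 <| Ideal.subset_span <| .inr <| .inl rfl
  minor₂₃ := Ideal.Quotient.eq.2 <| Ideal.subset_span <| .inr <| .inr rfl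

theorem exists_algHom {A : Type*} [CommRing A] [Algebra K A] {a b c d t : A}
    (h : MinorsVanish m n a b c d t) :
    ∃ f : DeterminantalRing K m n →ₐ[K] A, ∀ i, f (coord i) = ![a, b, c, d, t] i := by
  have hle : minorsIdeal K m n ≤ RingHom.ker (aeval ![a, b, c, d, t] : _ →ₐ[K] A) := by
    rw [minorsIdeal, Ideal.span_le]
    rintro _ (rfl | rfl | rfl)
    · simpa [sub_eq_zero] using h.minor₁₂
    · simpa [sub_eq_zero] using h.minor₁₃
    · simpa [sub_eq_zero] using h.minor₂₃
  exact ⟨Ideal.Quotient.liftₐ _ _ fun _ hx ↦ hle hx, fun i ↦ aeval_X _ i⟩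

theorem isIntegral_of_surjective {S A : Type*} [CommRing S] [CommRing A] [Algebra K S] [Algebra S A]
    [Algebra K A] [IsScalarTower K S A] (hn : 0 < n) {f : DeterminantalRing K m n →ₐ[K] A}
    (hf : Function.Surjective f) {c d t : S} (hc : f (coord 2) = algebraMap S A c)
    (hd : f (coord 3) = algebraMap S A d) (ht : f (coord 4) = algebraMap S A t) :
    Algebra.IsIntegral S A := by
  have h := (minorsVanish_coord (K := K) (m := m) (n := n)).map f
  rw [hc, hd, ht] at h
  refine _root_.isIntegral_of_surjective (φ := f.comp (Ideal.Quotient.mkₐ K _))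
    (hf.comp Ideal.Quotient.mk_surjective) fun i ↦ ?_
  change IsIntegral S (f (coord i))
  fin_cases i
  · exact h.isIntegral_a hn
  · exact h.isIntegral_b hn
  · exact hc ▸ isIntegral_algebraMap
  · exact hd ▸ isIntegral_algebraMap
  · exact ht ▸ isIntegral_algebraMap

section Parameters

/-- `R` as an algebra over the polynomial ring in the parameters: variables `0, 1, 2` act as
`c, d, t`. -/
noncomputable instance algebraParameters :
    Algebra (MvPolynomial (Fin 3) K) (DeterminantalRing K m n) :=
  (aeval ![coord 2, coord 3, coord 4] : _ →ₐ[K] DeterminantalRing K m n).toAlgebra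

theorem algebraMap_X (i : Fin 3) : algebraMap (MvPolynomial (Fin 3) K) (DeterminantalRing K m n)
    (X i) = ![coord 2, coord 3, coord 4] i :=
  aeval_X _ i

instance : IsScalarTower K (MvPolynomial (Fin 3) K) (DeterminantalRing K m n) :=
  .of_algebraMap_eq fun x ↦ (AlgHom.commutes (aeval ![coord 2, coord 3, coord 4]) x).symm

theorem isIntegral_parameters (hn : 0 < n) :
    Algebra.IsIntegral (MvPolynomial (Fin 3) K) (DeterminantalRing K m n) :=
  have hX := algebraMap_X (K := K) (m := m) (n := n)
  isIntegral_of_surjective hn (f := .id K _) Function.surjective_id (hX 0).symm (hX 1).symm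
    (hX 2).symm

theorem faithfulSMul_parameters [Nontrivial K] (hn : 0 < n) :
    FaithfulSMul (MvPolynomial (Fin 3) K) (DeterminantalRing K m n) := by
  let P := MvPolynomial (Fin 3) K
  obtain ⟨L, _, _, _, a, b, h⟩ :=
    MinorsVanish.exists_faithfulSMul (m := m) hn (X 0 : P) (X 2) (isRegular_X (n := 1))
  let _ : Algebra K L := Algebra.compHom L (algebraMap K P)
  have : IsScalarTower K P L := .of_algebraMap_eq fun _ ↦ rfl
  obtain ⟨f, hf⟩ := exists_algHom (K := K) h
  have hcomp : f.comp (IsScalarTower.toAlgHom K P _) = IsScalarTower.toAlgHom K P L := by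
    refine MvPolynomial.algHom_ext fun i ↦ ?_
    rw [AlgHom.comp_apply, IsScalarTower.toAlgHom_apply, algebraMap_X]
    fin_cases i
    exacts [hf 2, hf 3, hf 4]
  exact faithfulSMul_of_algHom (B := L)
    { (f : _ →+* L) with commutes' := DFunLike.congr_fun hcomp }

theorem ringKrullDim_eq [IsNoetherianRing K] [Nontrivial K] (hn : 0 < n) :
    ringKrullDim (DeterminantalRing K m n) = ringKrullDim K + 3 := by
  have := isIntegral_parameters (K := K) (m := m) hn
  have := faithfulSMul_parameters (K := K) (m := m) hn
  rw [ringKrullDim_eq_of_isIntegral (MvPolynomial (Fin 3) K),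
    MvPolynomial.ringKrullDim_of_isNoetherianRing, Nat.card_fin, Nat.cast_ofNat]

end Parameters

section Quotient

-- The algebra structure on a quotient of a quotient is not found at the default depth.
set_option maxSynthPendingDepth 3

/-- The ideal `(t, c, d)` of `R` generated by the parameters. -/
noncomputable abbrev parameterIdeal (K : Type u) [CommRing K] (m n : ℕ) :
    Ideal (DeterminantalRing K m n) :=
  .span {coord 4, coord 2, coord 3}

theorem isIntegral_quotient (hn : 0 < n) :
    Algebra.IsIntegral K (DeterminantalRing K m n ⧸ parameterIdeal K m n) := by
  have hmem {x : DeterminantalRing K m n} (hx : x ∈ ({coord 4, coord 2, coord 3} : Set _)) :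
      Ideal.Quotient.mkₐ K (parameterIdeal K m n) x = algebraMap K _ 0 := by
    rw [map_zero]
    exact Ideal.Quotient.eq_zero_iff_mem.2 (Ideal.subset_span hx)
  exact isIntegral_of_surjective hn (Ideal.Quotient.mkₐ_surjective K _) (hmem (by simp))
    (hmem (by simp)) (hmem (by simp))

theorem faithfulSMul_quotient (hn : 0 < n) :
    FaithfulSMul K (DeterminantalRing K m n ⧸ parameterIdeal K m n) := by
  have horigin : MinorsVanish m n (0 : K) 0 0 0 0 := by
    constructor <;> simp [hn.ne']
  obtain ⟨f, hf⟩ := exists_algHom (K := K) horigin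
  have hle : parameterIdeal K m n ≤ RingHom.ker f := by
    rw [Ideal.span_le]
    rintro _ (rfl | rfl | rfl)
    · exact hf 4
    · exact hf 2
    · exact hf 3
  exact faithfulSMul_of_algHom (Ideal.Quotient.liftₐ _ f fun _ hx ↦ hle hx)

theorem ringKrullDim_quotient (hn : 0 < n) :
    ringKrullDim (DeterminantalRing K m n ⧸ parameterIdeal K m n) = ringKrullDim K := by
  have := isIntegral_quotient (K := K) (m := m) hn
  have := faithfulSMul_quotient (K := K) (m := m) hn
  exact ringKrullDim_eq_of_isIntegral K (DeterminantalRing K m n ⧸ parameterIdeal K m n)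

end Quotient

end DeterminantalRing

theorem stmt8_general (K : Type*) [CommRing K] [IsNoetherianRing K] [Nontrivial K] (m n : ℕ)
    (hn : 0 < n) :
    ringKrullDim (DeterminantalRing K m n) = ringKrullDim K + 3 ∧
    ringKrullDim (DeterminantalRing K m n ⧸ DeterminantalRing.parameterIdeal K m n) =
      ringKrullDim K :=
  ⟨DeterminantalRing.ringKrullDim_eq hn, DeterminantalRing.ringKrullDim_quotient hn⟩

/-- t, c, d form a homogeneous system of parameters for
R = K[A,B,C,D,T]/I (variables 0=A, 1=B, 2=C, 3=D, 4=T):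
R has Krull dimension 3 and R/(t,c,d) has Krull dimension 0. -/
theorem stmt8 (K : Type) [Field K] (m n : ℕ) (hm : 0 < m) (hn : 0 < n)
    (I : Ideal (MvPolynomial (Fin 5) K))
    (hI : I = Ideal.span
      { (X 0 ^ 2) * (X 0 ^ 2 + X 4 ^ m) - X 1 * X 2,
        (X 0 ^ 2 + X 4 ^ m) * (X 1 ^ n - X 3) - X 2 * X 3,
        X 1 * (X 1 ^ n - X 3) - (X 0 ^ 2) * X 3 })
    (c d t : MvPolynomial (Fin 5) K ⧸ I)
    (hc : c = Ideal.Quotient.mk I (X 2)) (hd : d = Ideal.Quotient.mk I (X 3))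
    (ht : t = Ideal.Quotient.mk I (X 4)) :
    ringKrullDim (MvPolynomial (Fin 5) K ⧸ I) = 3 ∧
    ringKrullDim ((MvPolynomial (Fin 5) K ⧸ I) ⧸ (Ideal.span {t, c, d})) = 0 := by
  subst hI hc hd ht
  have h := stmt8_general K m n hn
  rwa [ringKrullDim_eq_zero_of_field, zero_add] at h
end

section
/- Let K be a field of characteristic p > 2 and n ≥ 1. The graded hypersurface H = K[A,X,Y]/(A² - XY(X^n - Y)), with deg A = 2n+1, deg X = 2, deg Y = 2n, is a normal integral domain. -/
/-!
If `R` is an integrally closed domain with `2 ∈ Rˣ` and `f` is a nonzero nonunit generating a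
radical ideal, then `f` is not a square, so `R[√f]` embeds in the quadratic extension `F(√f)` of
the fraction field `F` of `R`. For `x = r + s√f` integral over `R`, the trace `2r` and the norm
`r² - s²f` lie in `R`, hence so do `r` and `s²f`. Then `(sf)² ∈ fR`, so `sf ∈ fR` because `f` is
radical, and `s ∈ R`. Thus `R[√f]` is the integral closure of `R` in `F(√f)`. In `R[X, Y]` the
element `XY(Xⁿ - Y)` is radical, being a product of pairwise nonassociated primes.
-/

open MvPolynomial

section Radical

variable {M : Type*} [CommMonoidWithZero M]

lemma isRadical_prime_mul {p a : M} (hp : Prime p) (ha : IsRadical a) (hpa : ¬ p ∣ a) :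
    IsRadical (p * a) := by
  intro k x hx
  obtain ⟨y, rfl⟩ := ha k x (dvd_of_mul_left_dvd hx)
  have hpy : p ∣ y := (hp.dvd_or_dvd (hp.dvd_of_dvd_pow (dvd_of_mul_right_dvd hx))).resolve_left hpa
  rw [mul_comm p a]
  exact mul_dvd_mul_left a hpy

lemma not_isSquare_of_isRadical [IsCancelMulZero M] {a : M} (ha : IsRadical a) (ha0 : a ≠ 0)
    (hau : ¬ IsUnit a) : ¬ IsSquare a := by
  rintro ⟨s, rfl⟩
  have hs : IsUnit s := ha.squarefree ha0 s dvd_rfl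
  exact hau (hs.mul hs)

end Radical

section FractionField

variable {R : Type*} [CommRing R] [IsIntegrallyClosed R]
  {F : Type*} [Field F] [Algebra R F] [IsFractionRing R F]

lemma isSquare_of_isSquare_algebraMap {a : R} (ha : IsSquare (algebraMap R F a)) :
    IsSquare a := by
  obtain ⟨x, hx⟩ := ha
  rw [← sq] at hx
  obtain ⟨r, rfl⟩ := IsIntegrallyClosed.exists_algebraMap_eq_of_isIntegral_pow (R := R)
    two_pos (hx ▸ isIntegral_algebraMap)
  exact ⟨r, IsFractionRing.injective R F (by rw [hx, map_mul, sq])⟩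

lemma exists_algebraMap_eq_of_sq_mul_algebraMap {f c : R} (hf : IsRadical f) (hf0 : f ≠ 0) {y : F}
    (hy : y ^ 2 * algebraMap R F f = algebraMap R F c) : ∃ r, algebraMap R F r = y := by
  have hsq : (y * algebraMap R F f) ^ 2 = algebraMap R F (f * c) := by
    rw [map_mul, ← hy]
    ring
  obtain ⟨g, hg⟩ := IsIntegrallyClosed.exists_algebraMap_eq_of_isIntegral_pow (R := R)
    two_pos (hsq ▸ isIntegral_algebraMap)
  have hg2 : g ^ 2 = f * c := IsFractionRing.injective R F (by rw [map_pow, hg, hsq])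
  obtain ⟨r, rfl⟩ := hf 2 g ⟨c, hg2⟩
  have hf0' : algebraMap R F f ≠ 0 :=
    (map_ne_zero_iff _ (IsFractionRing.injective R F)).mpr hf0
  refine ⟨r, mul_right_cancel₀ hf0' ?_⟩
  rw [← hg, map_mul, mul_comm]

end FractionField

section QuadraticAlgebra

open QuadraticAlgebra

section Integral

variable {R A : Type*} [CommRing R] [CommRing A] [Algebra R A] {a b : A}
  {x : QuadraticAlgebra A a b}

lemma isIntegral_star_of_isIntegral (hx : IsIntegral R x) : IsIntegral R (star x) := by
  refine hx.map_of_comp_eq (RingHom.id R) (starRingEnd _) ?_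
  ext r <;> simp [starRingEnd_apply, IsScalarTower.algebraMap_apply R A (QuadraticAlgebra A a b)]

lemma isIntegral_trace_of_isIntegral (hx : IsIntegral R x) : IsIntegral R (trace x) := by
  rw [← isIntegral_algebraMap_iff (algebraMap_injective (a := a) (b := b)),
    algebraMap_trace_eq_add_star]
  exact hx.add (isIntegral_star_of_isIntegral hx)

lemma isIntegral_norm_of_isIntegral (hx : IsIntegral R x) : IsIntegral R (norm x) := by
  rw [← isIntegral_algebraMap_iff (algebraMap_injective (a := a) (b := b)),
    algebraMap_norm_eq_mul_star]
  exact hx.mul (isIntegral_star_of_isIntegral hx)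

end Integral

/-- The coefficientwise map `R[ω] → A[ω]` of quadratic algebras induced by the structure map of an
`R`-algebra `A`. -/
def quadraticAlgebraMap {R : Type*} (A : Type*) [CommRing R] [CommRing A] [Algebra R A] (a b : R) :
    QuadraticAlgebra R a b →ₐ[R] QuadraticAlgebra A (algebraMap R A a) (algebraMap R A b) where
  toFun x := ⟨algebraMap R A x.re, algebraMap R A x.im⟩
  map_one' := by ext <;> simp
  map_mul' x y := by ext <;> simp
  map_zero' := by ext <;> simp
  map_add' x y := by ext <;> simp
  commutes' r := by
    ext <;> simp [IsScalarTower.algebraMap_apply R A (QuadraticAlgebra A _ _)]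

lemma quadraticAlgebraMap_injective {R A : Type*} [CommRing R] [CommRing A] [Algebra R A]
    [FaithfulSMul R A] (a b : R) : Function.Injective (quadraticAlgebraMap A a b) := by
  intro x y hxy
  have hinj := FaithfulSMul.algebraMap_injective R A
  exact QuadraticAlgebra.ext (hinj (congrArg re hxy)) (hinj (congrArg im hxy))

lemma adjoinRoot_root_sq {R : Type*} [CommRing R] (f : R) :
    AdjoinRoot.root (Polynomial.X ^ 2 - Polynomial.C f) ^ 2 = AdjoinRoot.of _ f := by
  have h := AdjoinRoot.eval₂_root (Polynomial.X ^ 2 - Polynomial.C f)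
  simpa only [Polynomial.eval₂_sub, Polynomial.eval₂_pow, Polynomial.eval₂_X,
    Polynomial.eval₂_C, sub_eq_zero] using h

/-- Adjoining a square root of `f` as a polynomial quotient and as a quadratic algebra give the same
`R`-algebra. -/
noncomputable def adjoinRootEquivQuadraticAlgebra {R : Type*} [CommRing R] (f : R) :
    AdjoinRoot (Polynomial.X ^ 2 - Polynomial.C f) ≃ₐ[R] QuadraticAlgebra R f 0 :=
  AlgEquiv.ofAlgHom
    (AdjoinRoot.liftAlgHom _ (Algebra.ofId R _) omega (by
      simp [sq, omega_mul_omega_eq_algebraMap]))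
    (lift ⟨AdjoinRoot.root _, by
      rw [← sq, adjoinRoot_root_sq, zero_smul, add_zero, ← Algebra.algebraMap_eq_smul_one,
        AdjoinRoot.algebraMap_eq]⟩)
    (by ext <;> simp)
    (by ext; simp)

variable {R : Type*} [CommRing R] [IsIntegrallyClosed R] {f : R}

lemma fact_sq_ne_of_not_isSquare (F : Type*) [Field F] [Algebra R F] [IsFractionRing R F]
    (hf : ¬ IsSquare f) :
    Fact (∀ r : F, r ^ 2 ≠ algebraMap R F f + algebraMap R F 0 * r) := by
  refine ⟨fun r hr ↦ hf (isSquare_of_isSquare_algebraMap (F := F) ⟨r, ?_⟩)⟩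
  rw [← sq, hr, map_zero, zero_mul, add_zero]

lemma isDomain_quadraticAlgebra [IsDomain R] (hf : ¬ IsSquare f) :
    IsDomain (QuadraticAlgebra R f 0) := by
  have := fact_sq_ne_of_not_isSquare (FractionRing R) hf
  exact (quadraticAlgebraMap_injective (A := FractionRing R) f 0).isDomain
    (quadraticAlgebraMap (FractionRing R) f 0).toRingHom

lemma range_quadraticAlgebraMap_eq_integralClosure (F : Type*) [Field F] [Algebra R F]
    [IsFractionRing R F] (hf : IsRadical f) (hf0 : f ≠ 0) (h2 : IsUnit (2 : R)) :
    (quadraticAlgebraMap F f 0).range = integralClosure R _ := by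
  apply le_antisymm
  · rintro _ ⟨x, rfl⟩
    exact (Algebra.IsIntegral.isIntegral x).map (quadraticAlgebraMap F f 0)
  · intro x (hx : IsIntegral R x)
    obtain ⟨t, ht⟩ := IsIntegrallyClosed.isIntegral_iff.mp (isIntegral_trace_of_isIntegral hx)
    obtain ⟨m, hm⟩ := IsIntegrallyClosed.isIntegral_iff.mp (isIntegral_norm_of_isIntegral hx)
    simp only [trace_def, map_zero, zero_mul, add_zero] at ht
    simp only [norm_def, map_zero, zero_mul, add_zero] at hm
    obtain ⟨r, rfl⟩ := h2.dvd (a := t)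
    have h2F : (2 : F) ≠ 0 := by
      simpa only [map_ofNat] using (h2.map (algebraMap R F)).ne_zero
    have hre : algebraMap R F r = x.re := mul_left_cancel₀ h2F (by rw [← ht, map_mul, map_ofNat])
    obtain ⟨s, him⟩ : ∃ s, algebraMap R F s = x.im := by
      refine exists_algebraMap_eq_of_sq_mul_algebraMap (c := r ^ 2 - m) hf hf0 ?_
      rw [map_sub, map_pow, hre, hm]
      ring
    exact ⟨⟨r, s⟩, QuadraticAlgebra.ext hre him⟩

lemma isIntegrallyClosed_quadraticAlgebra [IsDomain R] (hf : IsRadical f) (hf0 : f ≠ 0)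
    (hfu : ¬ IsUnit f) (h2 : IsUnit (2 : R)) : IsIntegrallyClosed (QuadraticAlgebra R f 0) := by
  have := fact_sq_ne_of_not_isSquare (FractionRing R) (not_isSquare_of_isRadical hf hf0 hfu)
  have := integralClosure.isIntegrallyClosedOfFiniteExtension (R := R) (FractionRing R)
    (L := QuadraticAlgebra (FractionRing R) (algebraMap R _ f) (algebraMap R _ 0))
  let e := (AlgEquiv.ofInjective _ (quadraticAlgebraMap_injective (A := FractionRing R) f 0)).trans
    (Subalgebra.equivOfEq _ _
      (range_quadraticAlgebraMap_eq_integralClosure (FractionRing R) hf hf0 h2))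
  exact .of_equiv e.symm.toRingEquiv

end QuadraticAlgebra

section MvPolynomial

variable {R : Type*} [CommRing R]

lemma isIntegrallyClosed_mvPolynomial_fin [IsDomain R] [IsIntegrallyClosed R] (n : ℕ) :
    IsIntegrallyClosed (MvPolynomial (Fin n) R) := by
  induction n with
  | zero => exact .of_equiv (isEmptyAlgEquiv R (Fin 0)).symm.toRingEquiv
  | succ n ih => exact .of_equiv (finSuccEquiv R n).symm.toRingEquiv

lemma finSuccEquiv_rename_succ {n : ℕ} (f : MvPolynomial (Fin n) R) :
    finSuccEquiv R n (rename Fin.succ f) = Polynomial.C f := by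
  induction f using MvPolynomial.induction_on with
  | C r => simpa [MvPolynomial.algebraMap_eq] using (finSuccEquiv R n).commutes r
  | add f g hf hg => simp [hf, hg]
  | mul_X f i hf => simp [hf, finSuccEquiv_X_succ]

/-- The coordinate ring of the double cover `X₀² = f(X₁, …, Xₙ)` of affine `n`-space is obtained
from the polynomial ring by adjoining a square root of `f`. -/
noncomputable def quotientSpanEquivQuadraticAlgebra {n : ℕ} (f : MvPolynomial (Fin n) R) :
    (MvPolynomial (Fin (n + 1)) R ⧸ Ideal.span {X 0 ^ 2 - rename Fin.succ f}) ≃+*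
      QuadraticAlgebra (MvPolynomial (Fin n) R) f 0 :=
  (Ideal.quotientEquiv _ (Ideal.span {Polynomial.X ^ 2 - Polynomial.C f})
    (finSuccEquiv R n).toRingEquiv (by
      rw [Ideal.map_span, Set.image_singleton]
      simp [finSuccEquiv_rename_succ, finSuccEquiv_X_zero])).trans
    (adjoinRootEquivQuadraticAlgebra f).toRingEquiv

/-- The automorphism `X ↦ X`, `Y ↦ Xⁿ - Y` of `R[X, Y]`, with `X = X 0` and `Y = X 1`; it shows that
`Xⁿ - Y` is as good a variable as `Y`. -/
noncomputable def powSubEquiv (R : Type*) [CommRing R] (n : ℕ) :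
    MvPolynomial (Fin 2) R ≃ₐ[R] MvPolynomial (Fin 2) R :=
  have h : (aeval ![X 0, X 0 ^ n - X 1]).comp (aeval ![X 0, X 0 ^ n - X 1]) =
      AlgHom.id R (MvPolynomial (Fin 2) R) := by
    ext i
    fin_cases i <;> simp
  .ofAlgHom (aeval ![X 0, X 0 ^ n - X 1]) (aeval ![X 0, X 0 ^ n - X 1]) h h

@[simp]
lemma powSubEquiv_X_zero (n : ℕ) : powSubEquiv R n (X 0) = X 0 := by
  simp [powSubEquiv]

@[simp]
lemma powSubEquiv_X_one (n : ℕ) : powSubEquiv R n (X 1) = X 0 ^ n - X 1 := by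
  simp [powSubEquiv]

variable [IsDomain R]

lemma prime_X_pow_sub_X (n : ℕ) : Prime (X 0 ^ n - X 1 : MvPolynomial (Fin 2) R) := by
  rw [← powSubEquiv_X_one, MulEquiv.prime_iff]
  exact X_prime

lemma isRadical_X_mul_X_mul_X_pow_sub_X (n : ℕ) :
    IsRadical (X 0 * X 1 * (X 0 ^ n - X 1) : MvPolynomial (Fin 2) R) := by
  have h01 : ¬ (X 0 : MvPolynomial (Fin 2) R) ∣ X 1 := by simp [X_dvd_X]
  have h10 : ¬ (X 1 : MvPolynomial (Fin 2) R) ∣ X 0 := by simp [X_dvd_X]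
  have h02 : ¬ (X 0 : MvPolynomial (Fin 2) R) ∣ X 0 ^ n - X 1 := by
    rw [← powSubEquiv_X_one]
    nth_rw 1 [← powSubEquiv_X_zero n]
    rwa [map_dvd_iff]
  have h12 : ¬ (X 1 : MvPolynomial (Fin 2) R) ∣ X 0 ^ n - X 1 := fun h ↦
    h10 (X_prime.dvd_of_dvd_pow ((dvd_sub_left dvd_rfl).mp h))
  rw [mul_assoc]
  refine isRadical_prime_mul X_prime
    (isRadical_prime_mul X_prime (prime_X_pow_sub_X n).isRadical h12) fun h ↦ ?_
  exact (X_prime.dvd_or_dvd h).elim h01 h02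

end MvPolynomial

theorem stmt15_general {R : Type*} [CommRing R] [IsDomain R] [IsIntegrallyClosed R]
    (h2 : IsUnit (2 : R)) (n : ℕ) :
    IsDomain (MvPolynomial (Fin 3) R ⧸
      Ideal.span {(X 0 ^ 2 - X 1 * X 2 * (X 1 ^ n - X 2) : MvPolynomial (Fin 3) R)}) ∧
    IsIntegrallyClosed (MvPolynomial (Fin 3) R ⧸
      Ideal.span {(X 0 ^ 2 - X 1 * X 2 * (X 1 ^ n - X 2) : MvPolynomial (Fin 3) R)}) := by
  set f : MvPolynomial (Fin 2) R := X 0 * X 1 * (X 0 ^ n - X 1) with hf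
  have hrename : X 1 * X 2 * (X 1 ^ n - X 2) = rename Fin.succ f := by simp [hf]
  have hrad : IsRadical f := isRadical_X_mul_X_mul_X_pow_sub_X n
  have hf0 : f ≠ 0 :=
    mul_ne_zero (mul_ne_zero (X_ne_zero 0) (X_ne_zero 1)) (prime_X_pow_sub_X n).ne_zero
  have hfu : ¬ IsUnit f := fun h ↦ (prime_X_pow_sub_X n).not_isUnit (isUnit_of_mul_isUnit_right h)
  have h2' : IsUnit (2 : MvPolynomial (Fin 2) R) := by
    simpa only [map_ofNat] using h2.map (C : R →+* MvPolynomial (Fin 2) R)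
  have := isIntegrallyClosed_mvPolynomial_fin (R := R) 2
  have := isDomain_quadraticAlgebra (not_isSquare_of_isRadical hrad hf0 hfu)
  have := isIntegrallyClosed_quadraticAlgebra hrad hf0 hfu h2'
  let e := quotientSpanEquivQuadraticAlgebra f
  rw [hrename]
  exact ⟨e.toMulEquiv.isDomain _, .of_equiv e.symm⟩

/-- the hypersurface H = K[A,X,Y]/(A² - XY(Xⁿ-Y)) (variables 0=A, 1=X,
2=Y, char K = p > 2) is a normal integral domain. -/
theorem stmt15 (K : Type) [Field K] (p : ℕ) [Fact p.Prime] [CharP K p] (hp : 2 < p)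
    (n : ℕ) (hn : 0 < n)
    (hH : Ideal (MvPolynomial (Fin 3) K))
    (hhH : hH = Ideal.span {(X 0 ^ 2 - X 1 * X 2 * (X 1 ^ n - X 2) : MvPolynomial (Fin 3) K)}) :
    IsDomain (MvPolynomial (Fin 3) K ⧸ hH) ∧
    IsIntegrallyClosed (MvPolynomial (Fin 3) K ⧸ hH) := by
  subst hhH
  exact stmt15_general (Ring.two_ne_zero (ringChar.eq K p ▸ hp.ne')).isUnit n
end
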